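/- Let R be a symmetric (2,2)-double form satisfying the first Bianchi identity on an n-dimensional real inner product space (V,g), and let k ≥ 1 with 2k+2 ≤ n. Then the Laplace-type expansion h_{2k+2}(R) = ⟨N_{2k}(R), R⟩ holds. -/

import Mathlib

noncomputable section

open Finset

/-- Double forms over an `n`-dimensional real inner product space, described by their
coefficients in a fixed orthonormal basis: a `(p,q)`-double form corresponds to a function
supported on pairs of subsets of cardinalities `p` and `q`. -/
abbrev DForm (n : ℕ) := Finset (Fin n) → Finset (Fin n) → ℝ

namespace DForm

variable {n : ℕ}

/-- Sign of the shuffle placing the elements of `A` (in increasing order) before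
those of `B` (in increasing order). -/
def shuffleSign (A B : Finset (Fin n)) : ℝ :=
  (-1 : ℝ) ^ (∑ x ∈ B, (A.filter fun a => x < a).card)

/-- The exterior product of double forms. -/
def wedge (ω₁ ω₂ : DForm n) : DForm n := fun I J =>
  ∑ A ∈ I.powerset, ∑ B ∈ J.powerset,
    shuffleSign A (I \ A) * shuffleSign B (J \ B) * ω₁ A B * ω₂ (I \ A) (J \ B)

/-- Exterior powers `ω^k` of a double form. -/
def dpow (ω : DForm n) : ℕ → DForm n
  | 0 => fun I J => if I = ∅ ∧ J = ∅ then 1 else 0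
  | k + 1 => wedge ω (dpow ω k)

/-- The double Hodge star operator. -/
def hstar (ω : DForm n) : DForm n := fun I J =>
  shuffleSign Iᶜ I * shuffleSign Jᶜ J * ω Iᶜ Jᶜ

/-- The contraction `c` of double forms. -/
def contr (ω : DForm n) : DForm n := fun I J =>
  ∑ j : Fin n,
    if j ∈ I ∨ j ∈ J then 0
    else shuffleSign {j} I * shuffleSign {j} J * ω (insert j I) (insert j J)

/-- Iterated contraction `c^k`. -/
def citer (ω : DForm n) : ℕ → DForm n
  | 0 => ω
  | k + 1 => contr (citer ω k)

/-- The inner product of double forms. -/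
def dinner (ω₁ ω₂ : DForm n) : ℝ :=
  ∑ I : Finset (Fin n), ∑ J : Finset (Fin n), ω₁ I J * ω₂ I J

/-- The transpose `ω^t` of a double form. -/
def transp (ω : DForm n) : DForm n := fun I J => ω J I

/-- The composition (Greub) product `ω₁ ∘ ω₂` of double forms. -/
def comp (ω₁ ω₂ : DForm n) : DForm n := fun I J =>
  ∑ K : Finset (Fin n), ω₂ I K * ω₁ K J

/-- The scalar value of a `(0,0)`-double form. -/
def toScalar (ω : DForm n) : ℝ := ω ∅ ∅

/-- The metric, as a `(1,1)`-double form. -/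
def gMetric (n : ℕ) : DForm n := fun I J => if I = J ∧ I.card = 1 then 1 else 0

/-- Iterated composition power `ω^{∘r}` of a `(1,1)`-double form, with `ω^{∘0} = g`. -/
def cpow (ω : DForm n) : ℕ → DForm n
  | 0 => gMetric n
  | r + 1 => comp ω (cpow ω r)

/-- The `(1,1)`-double form associated to a bilinear form, given by its matrix in the
orthonormal basis. -/
def ofMatrix (h : Matrix (Fin n) (Fin n) ℝ) : DForm n := fun I J =>
  ∑ i : Fin n, ∑ j : Fin n, if I = {i} ∧ J = {j} then h i j else 0

/-- `ω` is a `(p,q)`-double form. -/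
def IsOfDeg (ω : DForm n) (p q : ℕ) : Prop :=
  ∀ I J : Finset (Fin n), ω I J ≠ 0 → I.card = p ∧ J.card = q

/-- `ω` is a symmetric double form. -/
def IsSym (ω : DForm n) : Prop := ∀ I J, ω I J = ω J I

/-- The sign relating `e_{v 0} ∧ ⋯ ∧ e_{v (p-1)}` to the corresponding increasing
basis `p`-vector (and `0` if the indices are not pairwise distinct). -/
def tupleSign {p : ℕ} (v : Fin p → Fin n) : ℝ :=
  if Function.Injective v then (((Equiv.Perm.sign (Tuple.sort v)) : ℤ) : ℝ) else 0

/-- Evaluation of a double form on wedges of basis vectors indexed by arbitrary tuples. -/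
def evalT (ω : DForm n) {p q : ℕ} (v : Fin p → Fin n) (w : Fin q → Fin n) : ℝ :=
  tupleSign v * tupleSign w * ω (Finset.image v Finset.univ) (Finset.image w Finset.univ)

/-- The first Bianchi identity for a `(2,2)`-double form:
`R(x∧y,z∧t) + R(y∧z,x∧t) + R(z∧x,y∧t) = 0`. -/
def Bianchi2 (R : DForm n) : Prop :=
  ∀ x y z t : Fin n,
    evalT R ![x, y] ![z, t] + evalT R ![y, z] ![x, t] + evalT R ![z, x] ![y, t] = 0

/-- The first Bianchi identity for a `(p,p)`-double form. -/
def FirstBianchi (ω : DForm n) (p : ℕ) : Prop :=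
  ∀ (x : Fin (p + 1) → Fin n) (y : Fin (p - 1) → Fin n),
    ∑ j : Fin (p + 1),
      (-1 : ℝ) ^ (j : ℕ) * evalT ω (x ∘ Fin.succAbove j) (Fin.cons (x j) y) = 0

/-- The characteristic coefficient `s_k(h)` of a bilinear form `h`, defined through the
characteristic polynomial: `det(h - λ g) = ∑ (-1)^(n-i) s_i(h) λ^(n-i)`. -/
def sInv (h : Matrix (Fin n) (Fin n) ℝ) (k : ℕ) : ℝ :=
  (-1 : ℝ) ^ k * (Matrix.charpoly h).coeff (n - k)

/-- The `k`-th cofactor (Newton) transformation `t_k(h) = (1/(k!(n-1-k)!)) *(g^{n-1-k} h^k)`. -/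
def tInv (h : Matrix (Fin n) (Fin n) ℝ) (k : ℕ) : DForm n :=
  ((k.factorial * (n - 1 - k).factorial : ℕ) : ℝ)⁻¹ •
    hstar (wedge (dpow (gMetric n) (n - 1 - k)) (dpow (ofMatrix h) k))

/-- The `(r,q)`-cofactor `s_{(r,q)}(h) = (1/(q!(n-q-r)!)) *(g^{n-q-r} h^q)`. -/
def sCof (h : Matrix (Fin n) (Fin n) ℝ) (r q : ℕ) : DForm n :=
  ((q.factorial * (n - q - r).factorial : ℕ) : ℝ)⁻¹ •
    hstar (wedge (dpow (gMetric n) (n - q - r)) (dpow (ofMatrix h) q))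

end DForm
namespace DForm
variable {n : ℕ}

/-- The Gauss–Bonnet invariant `h_{2k}(R) = c^{2k}(R^k)/(2k)!`. -/
noncomputable def hGB (R : DForm n) (k : ℕ) : ℝ :=
  toScalar (citer (dpow R k) (2 * k)) / ((2 * k).factorial : ℝ)

/-- The Einstein–Lovelock tensor `T_{2k}(R) = (c^{2k}(R^k)/(2k)!) g - c^{2k-1}(R^k)/(2k-1)!`. -/
noncomputable def TT (R : DForm n) (k : ℕ) : DForm n :=
  (toScalar (citer (dpow R k) (2 * k)) / ((2 * k).factorial : ℝ)) • gMetric n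
    - (((2 * k - 1).factorial : ℕ) : ℝ)⁻¹ • citer (dpow R k) (2 * k - 1)

/-- The cofactor transformation
`N_{2k}(R) = c^{2k-2}(R^k)/(2k-2)! - (c^{2k-1}(R^k)/(2k-1)!) g + (c^{2k}(R^k)/(2 (2k)!)) g²`. -/
noncomputable def NN (R : DForm n) (k : ℕ) : DForm n :=
  (((2 * k - 2).factorial : ℕ) : ℝ)⁻¹ • citer (dpow R k) (2 * k - 2)
    - (((2 * k - 1).factorial : ℕ) : ℝ)⁻¹ • wedge (citer (dpow R k) (2 * k - 1)) (gMetric n)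
    + (toScalar (citer (dpow R k) (2 * k)) / (2 * ((2 * k).factorial : ℝ))) •
        dpow (gMetric n) 2

end DForm

/-!
Put `ι_K ω = ω(e_K ∧ ·, e_K ∧ ·)`. As `ι_K ι_L` is `ι_{K ∪ L}` for disjoint `K`, `L` and `0`
otherwise, `c^j / j!` is the sum of the `ι_K` with `#K = j`. Hence `h_{2k+2}(R)` is a sum of
diagonal entries of `R · R^k`, in which the coefficient of `R(A, B)` is the signed sum of the
entries of `R^k` at `(I \ A, I \ B)` over all `I ⊇ A ∪ B` with `2k + 2` elements. With
`C = A ∩ B`, `P = A \ C` and `Q = B \ C`, this is up to sign the sum of `(ι_K R^k)(Q, P)` over the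
`K` disjoint from `C`. On the other side, the entry at `(B, A)` of `c^{2k-2+j}(R^k) g^j`, suitably
normalized, is the sum over the `E ⊆ C` with `j` elements of the sum of `(ι_K R^k)(Q, P)` over the
`K ⊇ C \ E`. The alternating sum over `j` in `N_{2k}(R)` is thus inclusion–exclusion for
`K ∩ C = ∅`.
-/

namespace DForm

section PowersetSums

variable {α M : Type*} [DecidableEq α] [AddCommMonoid M]

lemma sum_powerset_sdiff (s : Finset α) (f : Finset α → M) :
    ∑ t ∈ s.powerset, f (s \ t) = ∑ t ∈ s.powerset, f t :=
  sum_nbij' (s \ ·) (s \ ·) (by simp) (by simp)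
    (fun _ ht => Finset.sdiff_sdiff_eq_self (mem_powerset.1 ht))
    (fun _ ht => Finset.sdiff_sdiff_eq_self (mem_powerset.1 ht)) (by simp)

lemma sum_powersetCard_disjoint_union [Fintype α] (i : ℕ) (D : Finset α) (f : Finset α → M) :
    ∑ L ∈ powersetCard i univ with Disjoint D L, f (D ∪ L) =
      ∑ K ∈ powersetCard (i + #D) univ with D ⊆ K, f K := by
  refine sum_nbij' (D ∪ ·) (· \ D) ?_ ?_ ?_ ?_ (fun _ _ => rfl)
  · intro L hL
    simp only [mem_filter, mem_powersetCard_univ] at hL ⊢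
    exact ⟨by rw [card_union_of_disjoint hL.2, hL.1, add_comm], subset_union_left⟩
  · intro K hK
    simp only [mem_filter, mem_powersetCard_univ] at hK ⊢
    exact ⟨by rw [card_sdiff_of_subset hK.2, hK.1, Nat.add_sub_cancel], disjoint_sdiff⟩
  · intro L hL
    exact union_sdiff_cancel_left (mem_filter.1 hL).2
  · intro K hK
    exact union_sdiff_of_subset (mem_filter.1 hK).2

lemma sum_powersetCard_singleton_union [Fintype α] (j : ℕ) (f : Finset α → M) :
    ∑ x, ∑ K ∈ powersetCard j univ with Disjoint {x} K, f ({x} ∪ K) =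
      (j + 1) • ∑ K ∈ powersetCard (j + 1) univ, f K := by
  simp only [sum_powersetCard_disjoint_union j _ f, card_singleton, singleton_subset_iff]
  simp only [sum_filter]
  rw [sum_comm, smul_sum]
  refine sum_congr rfl fun K hK => ?_
  rw [sum_ite_mem, univ_inter, sum_const, mem_powersetCard_univ.1 hK]

/-- Expand `∏ i ∈ C, (1_K i - 1)` in two ways. -/
lemma sum_powerset_neg_one_pow_card_sdiff_subset {R : Type*} [CommRing R] (C K : Finset α) :
    ∑ E ∈ C.powerset, (-1 : R) ^ #E * (if C \ E ⊆ K then 1 else 0) =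
      if Disjoint K C then (-1) ^ #C else 0 := by
  have factor (i : α) : ((if i ∈ K then 1 else 0) - 1 : R) = if i ∉ K then -1 else 0 := by
    by_cases hi : i ∈ K <;> simp [hi]
  have expand := prod_sub (fun i => if i ∈ K then (1 : R) else 0) (fun _ => 1) C
  simpa only [factor, prod_ite_zero, prod_const, prod_const_one, one_pow, mul_one,
    ← subset_iff, ← disjoint_right, eq_comm] using expand

end PowersetSums

variable {n : ℕ}

section ShuffleSign

lemma shuffleSign_union_left {A A' : Finset (Fin n)} (h : Disjoint A A') (B : Finset (Fin n)) :
    shuffleSign (A ∪ A') B = shuffleSign A B * shuffleSign A' B := by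
  simp only [shuffleSign, filter_union, card_union_of_disjoint (disjoint_filter_filter h),
    sum_add_distrib, pow_add]

lemma shuffleSign_union_right (A : Finset (Fin n)) {B B' : Finset (Fin n)} (h : Disjoint B B') :
    shuffleSign A (B ∪ B') = shuffleSign A B * shuffleSign A B' := by
  simp only [shuffleSign, sum_union h, pow_add]

@[simp]
lemma shuffleSign_mul_self (A B : Finset (Fin n)) : shuffleSign A B * shuffleSign A B = 1 := by
  rw [shuffleSign, ← mul_pow, neg_one_mul, neg_neg, one_pow]

@[simp]
lemma shuffleSign_empty_right (A : Finset (Fin n)) : shuffleSign A ∅ = 1 := by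
  simp [shuffleSign]

/-- Every pair in `A × B` is inverted in exactly one of the two orders. -/
lemma shuffleSign_mul_swap {A B : Finset (Fin n)} (h : Disjoint A B) :
    shuffleSign A B * shuffleSign B A = (-1) ^ (#A * #B) := by
  have one_inversion {a b : Fin n} (ha : a ∈ A) (hb : b ∈ B) :
      ((if b < a then 1 else 0) + if a < b then 1 else 0) = 1 := by
    rcases lt_or_gt_of_ne (disjoint_iff_ne.1 h a ha b hb) with hab | hab <;> simp [hab, hab.le]
  rw [shuffleSign, shuffleSign, ← pow_add]
  congr 1
  simp only [card_filter]
  rw [sum_comm (s := B), ← sum_add_distrib, ← smul_eq_mul, ← sum_const]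
  refine sum_congr rfl fun a ha => ?_
  rw [← sum_add_distrib, sum_congr rfl fun b hb => one_inversion ha hb, ← card_eq_sum_ones]

lemma shuffleSign_mul_shuffleSign_comm {K X Y : Finset (Fin n)} (hX : Disjoint K X)
    (hY : Disjoint K Y) (hXY : #X = #Y) :
    shuffleSign X K * shuffleSign Y K = shuffleSign K X * shuffleSign K Y := by
  have swap : shuffleSign K X * shuffleSign X K = shuffleSign K Y * shuffleSign Y K := by
    rw [shuffleSign_mul_swap hX, shuffleSign_mul_swap hY, hXY]
  linear_combination shuffleSign K X * shuffleSign Y K * swap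
    - shuffleSign X K * shuffleSign Y K * shuffleSign_mul_self K X
    + shuffleSign K X * shuffleSign K Y * shuffleSign_mul_self Y K

end ShuffleSign

section Contraction

/-- The interior product of a double form with `e_K ⊗ e_K`, i.e. `ω(e_K ∧ ·, e_K ∧ ·)`. The sum of
these operators over the one-element sets `K` is the contraction. -/
def interiorDiag (K : Finset (Fin n)) : DForm n →ₗ[ℝ] DForm n where
  toFun ω X Y :=
    if Disjoint K X ∧ Disjoint K Y then
      shuffleSign K X * shuffleSign K Y * ω (K ∪ X) (K ∪ Y)
    else 0
  map_add' ω ω' := by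
    ext X Y
    simp only [Pi.add_apply]
    split_ifs <;> ring
  map_smul' a ω := by
    ext X Y
    simp only [Pi.smul_apply, smul_eq_mul, RingHom.id_apply]
    split_ifs <;> ring

lemma interiorDiag_apply (K : Finset (Fin n)) (ω : DForm n) (X Y : Finset (Fin n)) :
    interiorDiag K ω X Y =
      if Disjoint K X ∧ Disjoint K Y then
        shuffleSign K X * shuffleSign K Y * ω (K ∪ X) (K ∪ Y)
      else 0 :=
  rfl

lemma interiorDiag_apply_of_disjoint {K X Y : Finset (Fin n)} (hX : Disjoint K X)
    (hY : Disjoint K Y) (ω : DForm n) :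
    interiorDiag K ω X Y = shuffleSign K X * shuffleSign K Y * ω (K ∪ X) (K ∪ Y) :=
  if_pos ⟨hX, hY⟩

lemma apply_union_eq_interiorDiag {K X Y : Finset (Fin n)} (hX : Disjoint K X)
    (hY : Disjoint K Y) (ω : DForm n) :
    ω (K ∪ X) (K ∪ Y) = shuffleSign K X * shuffleSign K Y * interiorDiag K ω X Y := by
  rw [interiorDiag_apply_of_disjoint hX hY, ← mul_assoc, mul_mul_mul_comm, shuffleSign_mul_self,
    shuffleSign_mul_self, one_mul, one_mul]

lemma interiorDiag_interiorDiag (K L : Finset (Fin n)) (ω : DForm n) :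
    interiorDiag K (interiorDiag L ω) =
      if Disjoint K L then interiorDiag (K ∪ L) ω else 0 := by
  ext X Y
  by_cases hKL : Disjoint K L
  · rw [if_pos hKL]
    simp only [interiorDiag_apply, disjoint_union_left, disjoint_union_right, hKL.symm, true_and]
    by_cases hX : Disjoint K X <;> by_cases hY : Disjoint K Y <;>
      simp only [hX, hY, true_and, and_true, false_and, and_false, if_true, if_false]
    rw [mul_ite, mul_zero]
    refine if_congr Iff.rfl ?_ rfl
    rw [shuffleSign_union_left hKL, shuffleSign_union_left hKL, shuffleSign_union_right L hX,
      shuffleSign_union_right L hY, ← union_assoc, ← union_assoc, union_comm L K]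
    linear_combination (shuffleSign K X * shuffleSign K Y * shuffleSign L X * shuffleSign L Y *
      ω (K ∪ L ∪ X) (K ∪ L ∪ Y)) * shuffleSign_mul_self L K
  · simp [interiorDiag_apply, hKL, disjoint_comm (a := L)]

lemma contr_eq_sum_interiorDiag (ω : DForm n) : contr ω = ∑ x, interiorDiag {x} ω := by
  ext X Y
  simp only [contr, Finset.sum_apply, interiorDiag_apply, disjoint_singleton_left, ← not_or,
    ite_not, insert_eq]

/-- The divided power `c^j ω / j!` of the contraction. -/
def divContr (ω : DForm n) (j : ℕ) : DForm n :=
  ∑ K ∈ powersetCard j univ, interiorDiag K ω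

lemma divContr_apply (ω : DForm n) (j : ℕ) (X Y : Finset (Fin n)) :
    divContr ω j X Y = ∑ K ∈ powersetCard j univ, interiorDiag K ω X Y := by
  simp only [divContr, Finset.sum_apply]

lemma contr_smul (a : ℝ) (ω : DForm n) : contr (a • ω) = a • contr ω := by
  simp only [contr_eq_sum_interiorDiag, map_smul, smul_sum]

lemma contr_divContr (ω : DForm n) (j : ℕ) :
    contr (divContr ω j) = (j + 1) • divContr ω (j + 1) := by
  simp only [contr_eq_sum_interiorDiag, divContr, map_sum, interiorDiag_interiorDiag,
    ← sum_filter]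
  exact sum_powersetCard_singleton_union j fun K => interiorDiag K ω

lemma citer_eq_factorial_smul_divContr (ω : DForm n) (j : ℕ) :
    citer ω j = (j.factorial : ℝ) • divContr ω j := by
  induction j with
  | zero => ext X Y; simp [citer, divContr_apply, interiorDiag_apply, shuffleSign]
  | succ j ih =>
    rw [citer, ih, contr_smul, contr_divContr, ← Nat.cast_smul_eq_nsmul ℝ, smul_smul,
      Nat.factorial_succ, Nat.cast_mul, mul_comm]

lemma inv_factorial_smul_citer (ω : DForm n) (j : ℕ) :
    (j.factorial : ℝ)⁻¹ • citer ω j = divContr ω j := by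
  rw [citer_eq_factorial_smul_divContr, inv_smul_smul₀ (Nat.cast_ne_zero.2 j.factorial_ne_zero)]

lemma divContr_union_apply {D P Q : Finset (Fin n)} (hP : Disjoint D P) (hQ : Disjoint D Q)
    (ω : DForm n) (i : ℕ) :
    divContr ω i (D ∪ Q) (D ∪ P) = shuffleSign D Q * shuffleSign D P *
      ∑ K ∈ powersetCard (i + #D) univ with D ⊆ K, interiorDiag K ω Q P := by
  rw [← sum_powersetCard_disjoint_union i D fun K => interiorDiag K ω Q P, divContr_apply,
    mul_sum, sum_filter]
  refine sum_congr rfl fun L _ => ?_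
  rw [apply_union_eq_interiorDiag hQ hP (interiorDiag L ω), interiorDiag_interiorDiag]
  split_ifs <;> simp

end Contraction

section MetricPowers

/-- The divided power `g^j / j!` of the metric: the inner product of `j`-vectors. -/
def gDivPow (n j : ℕ) : DForm n := fun I J => if I = J ∧ #I = j then 1 else 0

lemma wedge_apply_eq_sum_sdiff (φ ψ : DForm n) (X Y : Finset (Fin n)) :
    wedge φ ψ X Y = ∑ E ∈ X.powerset, ∑ F ∈ Y.powerset,
      shuffleSign (X \ E) E * shuffleSign (Y \ F) F * φ (X \ E) (Y \ F) * ψ E F := by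
  rw [wedge, ← sum_powerset_sdiff]
  refine sum_congr rfl fun E hE => ?_
  rw [← sum_powerset_sdiff]
  refine sum_congr rfl fun F hF => ?_
  rw [Finset.sdiff_sdiff_eq_self (mem_powerset.1 hE),
    Finset.sdiff_sdiff_eq_self (mem_powerset.1 hF)]

lemma wedge_gDivPow_apply (φ : DForm n) (j : ℕ) (X Y : Finset (Fin n)) :
    wedge φ (gDivPow n j) X Y = ∑ E ∈ powersetCard j (X ∩ Y),
      shuffleSign (X \ E) E * shuffleSign (Y \ E) E * φ (X \ E) (Y \ E) := by
  have index : powersetCard j (X ∩ Y) = {E ∈ X.powerset | E ∈ Y.powerset ∧ #E = j} := by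
    ext E
    simp only [mem_powersetCard, subset_inter_iff, mem_filter, mem_powerset, and_assoc]
  rw [wedge_apply_eq_sum_sdiff, index, sum_filter]
  refine sum_congr rfl fun E _ => ?_
  simp only [gDivPow, ite_and, mul_ite, mul_one, mul_zero, sum_ite_eq]

lemma gMetric_eq_gDivPow_one : gMetric n = gDivPow n 1 := rfl

lemma wedge_gDivPow_zero (φ : DForm n) : wedge φ (gDivPow n 0) = φ := by
  ext X Y
  simp [wedge_gDivPow_apply]

lemma wedge_gDivPow_apply_of_card_eq (φ : DForm n) {j : ℕ} {X Y : Finset (Fin n)} (hX : #X = j)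
    (hY : #Y = j) : wedge φ (gDivPow n j) X Y = φ ∅ ∅ * gDivPow n j X Y := by
  rw [wedge_gDivPow_apply]
  by_cases hXY : X = Y
  · subst hXY hX
    simp [gDivPow]
  · have inter_lt : #(X ∩ Y) < j := by
      refine hX ▸ card_lt_card (inter_subset_left.ssubset_of_ne fun h => hXY ?_)
      exact eq_of_subset_of_card_le (inter_eq_left.1 h) (hY.trans hX.symm).le
    simp [gDivPow, hXY, powersetCard_eq_empty.2 inter_lt]

lemma wedge_gDivPow_gDivPow (i j : ℕ) :
    wedge (gDivPow n i) (gDivPow n j) = ((i + j).choose j : ℝ) • gDivPow n (i + j) := by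
  ext X Y
  rw [wedge_gDivPow_apply, Pi.smul_apply, Pi.smul_apply, smul_eq_mul]
  by_cases hXY : X = Y
  · subst hXY
    have term {E : Finset (Fin n)} (hE : E ∈ powersetCard j X) :
        shuffleSign (X \ E) E * shuffleSign (X \ E) E * gDivPow n i (X \ E) (X \ E) =
          if #X = i + j then 1 else 0 := by
      have card_add := card_sdiff_add_card_eq_card (mem_powersetCard.1 hE).1
      rw [(mem_powersetCard.1 hE).2] at card_add
      simp [gDivPow, ← card_add]
    rw [inter_self, sum_congr rfl fun E hE => term hE, sum_const, card_powersetCard]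
    by_cases hcard : #X = i + j <;> simp [gDivPow, hcard]
  · rw [gDivPow, if_neg (fun h => hXY h.1), mul_zero]
    refine sum_eq_zero fun E hE => ?_
    have ⟨hEX, hEY⟩ := subset_inter_iff.1 (mem_powersetCard.1 hE).1
    have sdiff_ne : X \ E ≠ Y \ E := fun h => hXY <| by
      rw [← sdiff_union_of_subset hEX, h, sdiff_union_of_subset hEY]
    simp [gDivPow, sdiff_ne]

lemma smul_wedge (a : ℝ) (φ ψ : DForm n) : wedge (a • φ) ψ = a • wedge φ ψ := by
  ext X Y
  simp only [wedge, Pi.smul_apply, smul_eq_mul, mul_sum, mul_left_comm, mul_assoc]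

lemma wedge_smul (a : ℝ) (φ ψ : DForm n) : wedge φ (a • ψ) = a • wedge φ ψ := by
  ext X Y
  simp only [wedge, Pi.smul_apply, smul_eq_mul, mul_sum, mul_left_comm]

lemma dpow_gMetric (n j : ℕ) : dpow (gMetric n) j = (j.factorial : ℝ) • gDivPow n j := by
  induction j with
  | zero =>
    ext I J
    simp only [dpow, gDivPow, Nat.factorial_zero, Nat.cast_one, one_smul, card_eq_zero]
    exact if_congr (by grind) rfl rfl
  | succ j ih =>
    rw [dpow, ih, wedge_smul, gMetric_eq_gDivPow_one, wedge_gDivPow_gDivPow, smul_smul,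
      add_comm 1 j, Nat.choose_succ_self_right, Nat.factorial_succ, Nat.cast_mul, mul_comm]

end MetricPowers

section LaplaceExpansion

/-- The cofactor transformation of order `r` of a double form `ω`: pairing it with `θ^t` computes
`c^{m+2r}(θ ω) / (m+2r)!` for `θ` of degree `(r,r)`. For `ω` of degree `(p,p)` one takes
`m = p - r`; the parameter is `m` so that no subtraction occurs in the exponents. -/
def cofactor (ω : DForm n) (m r : ℕ) : DForm n :=
  ∑ j ∈ range (r + 1), (-1 : ℝ) ^ (r + j) • wedge (divContr ω (m + j)) (gDivPow n j)

lemma cofactor_apply (ω : DForm n) (m : ℕ) {r : ℕ} {X : Finset (Fin n)} (hX : #X = r)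
    (Y : Finset (Fin n)) :
    cofactor ω m r X Y = ∑ E ∈ (X ∩ Y).powerset, (-1) ^ (r + #E) *
      (shuffleSign (X \ E) E * shuffleSign (Y \ E) E *
        divContr ω (m + #E) (X \ E) (Y \ E)) := by
  have card_mem : ∀ E ∈ (X ∩ Y).powerset, #E ∈ range (r + 1) := fun E hE =>
    mem_range_succ_iff.2 <| hX ▸ card_le_card ((mem_powerset.1 hE).trans inter_subset_left)
  rw [← sum_fiberwise_of_maps_to card_mem]
  simp only [cofactor, Finset.sum_apply, Pi.smul_apply, smul_eq_mul, wedge_gDivPow_apply, mul_sum,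
    powersetCard_eq_filter]
  refine sum_congr rfl fun j _ => sum_congr rfl fun E hE => ?_
  rw [(mem_filter.1 hE).2]

variable {P Q C : Finset (Fin n)}

lemma shuffleSign_mul_divContr_sdiff_apply (hCP : Disjoint C P) (hCQ : Disjoint C Q)
    (hPQ : #P = #Q) {E : Finset (Fin n)} (hE : E ⊆ C) (ω : DForm n) (m : ℕ) :
    shuffleSign ((C ∪ Q) \ E) E * shuffleSign ((C ∪ P) \ E) E *
        divContr ω (m + #E) ((C ∪ Q) \ E) ((C ∪ P) \ E) =
      shuffleSign C Q * shuffleSign C P *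
        ∑ K ∈ powersetCard (m + #C) univ with C \ E ⊆ K, interiorDiag K ω Q P := by
  obtain ⟨D, hED, rfl⟩ : ∃ D, Disjoint E D ∧ E ∪ D = C :=
    ⟨C \ E, disjoint_sdiff, union_sdiff_of_subset hE⟩
  obtain ⟨hEP, hDP⟩ := disjoint_union_left.1 hCP
  obtain ⟨hEQ, hDQ⟩ := disjoint_union_left.1 hCQ
  have sdiff_eq {Z : Finset (Fin n)} (hEZ : Disjoint E Z) : (E ∪ D ∪ Z) \ E = D ∪ Z := by
    rw [union_assoc, union_sdiff_cancel_left (disjoint_union_right.2 ⟨hED, hEZ⟩)]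
  rw [sdiff_eq hEQ, sdiff_eq hEP, divContr_union_apply hDP hDQ, union_sdiff_cancel_left hED,
    card_union_of_disjoint hED, ← add_assoc, ← mul_assoc]
  congr 1
  rw [shuffleSign_union_left hDQ, shuffleSign_union_left hDP, shuffleSign_union_left hED,
    shuffleSign_union_left hED]
  linear_combination (shuffleSign Q E * shuffleSign P E * shuffleSign D Q * shuffleSign D P) *
      shuffleSign_mul_self D E +
    shuffleSign D Q * shuffleSign D P * shuffleSign_mul_shuffleSign_comm hEP hEQ hPQ

lemma cofactor_union_apply (hCP : Disjoint C P) (hCQ : Disjoint C Q) (hPQ : Disjoint P Q)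
    (hcard : #P = #Q) (ω : DForm n) (m : ℕ) :
    cofactor ω m (#C + #P) (C ∪ Q) (C ∪ P) =
      (-1) ^ #P * (shuffleSign C Q * shuffleSign C P) *
        ∑ K ∈ powersetCard (m + #C) univ with Disjoint K C, interiorDiag K ω Q P := by
  have card_CQ : #(C ∪ Q) = #C + #P := by rw [card_union_of_disjoint hCQ, hcard]
  have inter_eq : (C ∪ Q) ∩ (C ∪ P) = C := by
    rw [← union_inter_distrib_left, disjoint_iff_inter_eq_empty.1 hPQ.symm, union_empty]
  have term {E : Finset (Fin n)} (hE : E ∈ C.powerset) :=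
    shuffleSign_mul_divContr_sdiff_apply hCP hCQ hcard (mem_powerset.1 hE) ω m
  rw [cofactor_apply ω m card_CQ, inter_eq,
    sum_congr rfl fun E hE => congrArg ((-1 : ℝ) ^ (#C + #P + #E) * ·) (term hE)]
  calc ∑ E ∈ C.powerset, (-1 : ℝ) ^ (#C + #P + #E) * (shuffleSign C Q * shuffleSign C P *
        ∑ K ∈ powersetCard (m + #C) univ with C \ E ⊆ K, interiorDiag K ω Q P)
    _ = (-1) ^ (#C + #P) * (shuffleSign C Q * shuffleSign C P) *
        ∑ K ∈ powersetCard (m + #C) univ, interiorDiag K ω Q P *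
          ∑ E ∈ C.powerset, (-1 : ℝ) ^ #E * (if C \ E ⊆ K then 1 else 0) := by
      simp only [mul_sum, sum_filter]
      rw [sum_comm]
      refine sum_congr rfl fun K _ => sum_congr rfl fun E _ => ?_
      rw [pow_add]
      split_ifs <;> ring
    _ = (-1) ^ #P * (shuffleSign C Q * shuffleSign C P) *
        ∑ K ∈ powersetCard (m + #C) univ with Disjoint K C, interiorDiag K ω Q P := by
      have sign_sq : (-1 : ℝ) ^ #C * (-1) ^ #C = 1 := pow_mul_pow_eq_one #C (by norm_num)
      simp_rw [sum_powerset_neg_one_pow_card_sdiff_subset, mul_ite, mul_zero, ← sum_filter,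
        ← sum_mul]
      rw [pow_add]
      linear_combination ((-1) ^ #P * (shuffleSign C Q * shuffleSign C P) *
        ∑ K ∈ powersetCard (m + #C) univ with Disjoint K C, interiorDiag K ω Q P) * sign_sq

lemma shuffleSign_union_union_mul (hCP : Disjoint C P) (hCQ : Disjoint C Q) (hPQ : Disjoint P Q)
    (hcard : #P = #Q) {K : Finset (Fin n)} (hKP : Disjoint K P) (hKQ : Disjoint K Q) :
    shuffleSign (C ∪ P) (K ∪ Q) * shuffleSign (C ∪ Q) (K ∪ P) =
      (-1) ^ #P * (shuffleSign C Q * shuffleSign C P) * (shuffleSign K Q * shuffleSign K P) := by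
  have sign_PQ : shuffleSign P Q * shuffleSign Q P = (-1) ^ #P := by
    rw [shuffleSign_mul_swap hPQ, ← hcard, pow_mul]
    rcases neg_one_pow_eq_or ℝ #P with h | h <;> simp [h]
  rw [shuffleSign_union_left hCP, shuffleSign_union_left hCQ, shuffleSign_union_right _ hKQ,
    shuffleSign_union_right _ hKQ, shuffleSign_union_right _ hKP, shuffleSign_union_right _ hKP,
    ← sign_PQ, mul_comm (shuffleSign K Q), ← shuffleSign_mul_shuffleSign_comm hKP hKQ hcard]
  linear_combination (shuffleSign P Q * shuffleSign Q P * shuffleSign C Q * shuffleSign C P *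
    shuffleSign P K * shuffleSign Q K) * shuffleSign_mul_self C K

lemma sum_complementary_eq_sum_interiorDiag (hCP : Disjoint C P) (hCQ : Disjoint C Q)
    (hPQ : Disjoint P Q) (hcard : #P = #Q) (ω : DForm n) (m : ℕ) :
    ∑ I ∈ powersetCard (m + 2 * (#C + #P)) univ with C ∪ P ⊆ I ∧ C ∪ Q ⊆ I,
        shuffleSign (C ∪ P) (I \ (C ∪ P)) * shuffleSign (C ∪ Q) (I \ (C ∪ Q)) *
          ω (I \ (C ∪ P)) (I \ (C ∪ Q)) =
      (-1) ^ #P * (shuffleSign C Q * shuffleSign C P) *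
        ∑ K ∈ powersetCard (m + #C) univ with Disjoint K C, interiorDiag K ω Q P := by
  have card_union : m + 2 * (#C + #P) = m + #C + #(C ∪ P ∪ Q) := by
    rw [card_union_of_disjoint (disjoint_union_left.2 ⟨hCQ, hPQ⟩), card_union_of_disjoint hCP]
    omega
  have subset_iff (I : Finset (Fin n)) : C ∪ P ⊆ I ∧ C ∪ Q ⊆ I ↔ C ∪ P ∪ Q ⊆ I := by
    simp only [union_subset_iff]
    tauto
  simp only [card_union, subset_iff]
  rw [← sum_powersetCard_disjoint_union (m + #C) (C ∪ P ∪ Q) fun I =>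
    shuffleSign (C ∪ P) (I \ (C ∪ P)) * shuffleSign (C ∪ Q) (I \ (C ∪ Q)) *
      ω (I \ (C ∪ P)) (I \ (C ∪ Q)), sum_filter, sum_filter, mul_sum]
  refine sum_congr rfl fun K _ => ?_
  simp only [disjoint_comm (b := K), disjoint_union_right, interiorDiag_apply]
  by_cases hKC : Disjoint K C <;> by_cases hKP : Disjoint K P <;> by_cases hKQ : Disjoint K Q <;>
    simp only [hKC, hKP, hKQ, and_self, and_true, and_false, if_true, if_false, mul_zero]
  have sdiff_P : (C ∪ P ∪ Q ∪ K) \ (C ∪ P) = K ∪ Q := by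
    rw [union_assoc, union_sdiff_cancel_left, union_comm]
    simp only [disjoint_union_left, disjoint_union_right]
    exact ⟨⟨hCQ, hPQ⟩, hKC.symm, hKP.symm⟩
  have sdiff_Q : (C ∪ P ∪ Q ∪ K) \ (C ∪ Q) = K ∪ P := by
    rw [union_right_comm C P Q, union_assoc, union_sdiff_cancel_left, union_comm]
    simp only [disjoint_union_left, disjoint_union_right]
    exact ⟨⟨hCP, hPQ.symm⟩, hKC.symm, hKQ.symm⟩
  rw [sdiff_P, sdiff_Q, shuffleSign_union_union_mul hCP hCQ hPQ hcard hKP hKQ, mul_assoc]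

lemma cofactor_apply_eq_sum_complementary (ω : DForm n) (m : ℕ) {r : ℕ} {A B : Finset (Fin n)}
    (hA : #A = r) (hB : #B = r) :
    cofactor ω m r B A = ∑ I ∈ powersetCard (m + 2 * r) univ with A ⊆ I ∧ B ⊆ I,
      shuffleSign A (I \ A) * shuffleSign B (I \ B) * ω (I \ A) (I \ B) := by
  obtain ⟨C, P, Q, hCP, hCQ, hPQ, rfl, rfl⟩ : ∃ C P Q : Finset (Fin n), Disjoint C P ∧
      Disjoint C Q ∧ Disjoint P Q ∧ C ∪ P = A ∧ C ∪ Q = B :=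
    ⟨A ∩ B, A \ B, B \ A, (disjoint_sdiff_inter A B).symm, inter_comm A B ▸
      (disjoint_sdiff_inter B A).symm, disjoint_sdiff_sdiff, by grind, by grind⟩
  rw [card_union_of_disjoint hCP] at hA
  rw [card_union_of_disjoint hCQ] at hB
  have hcard : #P = #Q := by omega
  subst hA
  rw [cofactor_union_apply hCP hCQ hPQ hcard,
    sum_complementary_eq_sum_interiorDiag hCP hCQ hPQ hcard]

lemma divContr_apply_empty (ω : DForm n) (j : ℕ) :
    divContr ω j ∅ ∅ = ∑ I ∈ powersetCard j univ, ω I I := by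
  simp [divContr_apply, interiorDiag_apply]

lemma wedge_apply_self (θ ω : DForm n) (I : Finset (Fin n)) :
    wedge θ ω I I = ∑ A, ∑ B, if A ⊆ I ∧ B ⊆ I then
      shuffleSign A (I \ A) * shuffleSign B (I \ B) * θ A B * ω (I \ A) (I \ B) else 0 := by
  simp only [wedge, ← filter_subset_univ, sum_filter, ite_and]
  refine sum_congr rfl fun A _ => ?_
  split_ifs <;> simp

theorem divContr_wedge_eq_dinner_cofactor {θ : DForm n} {r : ℕ} (hθ : IsOfDeg θ r r)
    (ω : DForm n) (m : ℕ) :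
    divContr (wedge θ ω) (m + 2 * r) ∅ ∅ = dinner (cofactor ω m r) (transp θ) := by
  have regroup : divContr (wedge θ ω) (m + 2 * r) ∅ ∅ = ∑ A, ∑ B, θ A B *
      ∑ I ∈ powersetCard (m + 2 * r) univ with A ⊆ I ∧ B ⊆ I,
        shuffleSign A (I \ A) * shuffleSign B (I \ B) * ω (I \ A) (I \ B) := by
    simp only [divContr_apply_empty, wedge_apply_self, mul_sum, sum_filter]
    rw [sum_comm]
    refine sum_congr rfl fun A _ => ?_
    rw [sum_comm]
    refine sum_congr rfl fun B _ => sum_congr rfl fun I _ => ?_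
    split_ifs <;> ring
  rw [regroup, dinner, sum_comm]
  refine sum_congr rfl fun B _ => sum_congr rfl fun A _ => ?_
  by_cases hAB : θ A B = 0
  · simp [transp, hAB]
  · obtain ⟨hA, hB⟩ := hθ A B hAB
    rw [cofactor_apply_eq_sum_complementary ω m hA hB, mul_comm, transp]

end LaplaceExpansion

section GaussBonnet

lemma hGB_eq_divContr (R : DForm n) (k : ℕ) : hGB R k = divContr (dpow R k) (2 * k) ∅ ∅ := by
  rw [hGB, toScalar, div_eq_inv_mul, ← inv_factorial_smul_citer]
  rfl

lemma NN_eq_divContr (R : DForm n) (k : ℕ) :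
    NN R k = divContr (dpow R k) (2 * k - 2)
      - wedge (divContr (dpow R k) (2 * k - 1)) (gDivPow n 1)
      + divContr (dpow R k) (2 * k) ∅ ∅ • gDivPow n 2 := by
  have coeff : toScalar (citer (dpow R k) (2 * k)) / (2 * ((2 * k).factorial : ℝ)) * 2 =
      divContr (dpow R k) (2 * k) ∅ ∅ := by
    rw [← hGB_eq_divContr, hGB]
    field_simp
  rw [NN, ← smul_wedge, inv_factorial_smul_citer, inv_factorial_smul_citer, dpow_gMetric,
    smul_smul, Nat.factorial_two, Nat.cast_ofNat, coeff, gMetric_eq_gDivPow_one]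

lemma NN_apply_eq_cofactor (R : DForm n) {k : ℕ} (hk : 1 ≤ k) {X Y : Finset (Fin n)}
    (hX : #X = 2) (hY : #Y = 2) :
    NN R k X Y = cofactor (dpow R k) (2 * k - 2) 2 X Y := by
  have exponent_one : 2 * k - 2 + 1 = 2 * k - 1 := by omega
  have exponent_two : 2 * k - 2 + 2 = 2 * k := by omega
  simp only [NN_eq_divContr, cofactor, sum_range_succ, sum_range_zero, zero_add, add_zero,
    exponent_one, exponent_two, wedge_gDivPow_zero, Pi.add_apply, Pi.sub_apply, Pi.smul_apply,
    smul_eq_mul, wedge_gDivPow_apply_of_card_eq _ hX hY]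
  ring

end GaussBonnet

section InnerProduct

lemma IsSym.transp_eq {ω : DForm n} (hω : IsSym ω) : transp ω = ω := by
  ext I J
  exact hω J I

lemma dinner_congr_of_isOfDeg {φ ψ θ : DForm n} {p q : ℕ} (hθ : IsOfDeg θ p q)
    (h : ∀ X Y, #X = p → #Y = q → φ X Y = ψ X Y) : dinner φ θ = dinner ψ θ := by
  refine sum_congr rfl fun X _ => sum_congr rfl fun Y _ => ?_
  by_cases hXY : θ X Y = 0
  · rw [hXY, mul_zero, mul_zero]
  · rw [h X Y (hθ X Y hXY).1 (hθ X Y hXY).2]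

end InnerProduct

end DForm

open DForm in
theorem statement12_general {n : ℕ} (R : DForm n) (hgr : IsOfDeg R 2 2) {k : ℕ} (hk : 1 ≤ k) :
    hGB R (k + 1) = dinner (NN R k) (transp R) := by
  have exponent : 2 * (k + 1) = 2 * k - 2 + 2 * 2 := by omega
  have hgr' : IsOfDeg (transp R) 2 2 := fun I J h => (hgr J I h).symm
  rw [hGB_eq_divContr, exponent, dpow, divContr_wedge_eq_dinner_cofactor hgr]
  exact dinner_congr_of_isOfDeg hgr' fun X Y hX hY => (NN_apply_eq_cofactor R hk hX hY).symm

open DForm in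
/-- Laplace expansion of the Gauss–Bonnet invariants: `h_{2k+2}(R) = ⟨N_{2k}(R), R⟩`. -/
theorem statement12 (n : ℕ) (R : DForm n) (hsym : IsSym R) (hb : Bianchi2 R)
    (hgr : IsOfDeg R 2 2) (k : ℕ) (hk : 1 ≤ k) (hkn : 2 * k + 2 ≤ n) :
    hGB R (k + 1) = dinner (NN R k) R := by
  rw [statement12_general R hgr hk, hsym.transp_eq]
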